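/- Suppose g(r) = o(r^{-c}) as r → ∞ for some c > d. Fix γ > 0 and β₀ ∈ ℝ, and let (a_n) be a sequence of positive reals such that n·r̂_n(γ)^d·G(a_n) → e^{-β₀} as n → ∞. Let L_n^o be the length (in the toroidal metric) of the longest edge incident on the vertex 0 in the graph G_n^o(r̂_n(γ)) (with L_n^o := 0 if vertex 0 is isolated). Then P(L_n^o ≤ a_n·r̂_n(γ)) → exp(−e^{−β₀}) as n → ∞. -/

import Mathlib

open MeasureTheory ProbabilityTheory Filter Set

noncomputable section

namespace RCM

/-- The toroidal metric on the unit cube. -/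
def torusDist {d : ℕ} (x y : EuclideanSpace ℝ (Fin d)) : ℝ :=
  ⨅ z : Fin d → ℤ, ‖x - y - (WithLp.equiv 2 (Fin d → ℝ)).symm (fun i => (z i : ℝ))‖

/-- The half-open unit cube `S = (-1/2, 1/2]^d`. -/
def cube (d : ℕ) : Set (EuclideanSpace ℝ (Fin d)) :=
  {x | ∀ i, x i ∈ Set.Ioc (-(1/2) : ℝ) (1/2)}

/-- The Palm version of the random connection model: an extra vertex `0` is placed at the
origin (`X 0 = 0`), the points `X_i`, `i ≥ 1` are i.i.d. uniform on the cube, `N_n` are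
coupled Poisson counts and `U_{ij}`, `0 ≤ i < j`, are i.i.d. uniform edge variables, the
three families being mutually independent. -/
structure PalmModel (d : ℕ) {Ω : Type*} [MeasurableSpace Ω] (P : Measure Ω) where
  g : ℝ → ℝ
  α : ℝ
  X : ℕ → Ω → EuclideanSpace ℝ (Fin d)
  N : ℕ → Ω → ℕ
  U : ℕ → ℕ → Ω → ℝ
  g_antitone : AntitoneOn g (Set.Ici 0)
  g_mem : ∀ r : ℝ, 0 ≤ r → g r ∈ Set.Icc (0 : ℝ) 1
  g_integrable : MeasureTheory.Integrable (fun x : EuclideanSpace ℝ (Fin d) => g ‖x‖)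
  α_def : α = ∫ x : EuclideanSpace ℝ (Fin d), g ‖x‖
  α_pos : 0 < α
  X_zero : ∀ ω, X 0 ω = 0
  X_meas : ∀ i, Measurable (X i)
  X_unif : ∀ i : ℕ, 1 ≤ i → Measure.map (X i) P = volume.restrict (cube d)
  X_indep : iIndepFun
    (fun i : {i : ℕ // 1 ≤ i} => X i) P
  N_meas : ∀ n, Measurable (N n)
  N_mono : ∀ ω, Monotone fun n => N n ω
  N_poisson : ∀ n k : ℕ,
    P {ω | N n ω = k} = ENNReal.ofReal (Real.exp (-(n : ℝ)) * (n : ℝ) ^ k / k.factorial)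
  U_meas : ∀ i j, Measurable (U i j)
  U_unif : ∀ i j : ℕ, i < j →
    Measure.map (U i j) P = volume.restrict (Set.Icc (0 : ℝ) 1)
  U_indep : iIndepFun
    (fun p : {p : ℕ × ℕ // p.1 < p.2} => U p.1.1 p.1.2) P
  families_indep : iIndep
    (![MeasurableSpace.comap (fun ω => fun i : ℕ => X i ω) inferInstance,
       MeasurableSpace.comap (fun ω => fun n : ℕ => N n ω) inferInstance,
       MeasurableSpace.comap (fun ω => fun p : ℕ × ℕ => U p.1 p.2 ω) inferInstance]) P

variable {d : ℕ} {Ω : Type*} [MeasurableSpace Ω] {P : Measure Ω}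

/-- Adjacency in the graph `G_n^o(r)` on the vertex set `{0, 1, …, N_n}`. -/
def adjO (M : PalmModel d P) (n : ℕ) (r : ℝ) (ω : Ω) (i j : ℕ) : Prop :=
  i ≠ j ∧ i ≤ M.N n ω ∧ j ≤ M.N n ω ∧
    M.U (min i j) (max i j) ω ≤ M.g (torusDist (M.X i ω) (M.X j ω) / r)

/-- `r̂_n(γ)` defined by `r̂_n(γ)^d = γ log n / (α n)`. -/
def rhatP (M : PalmModel d P) (γ : ℝ) (n : ℕ) : ℝ :=
  (γ * Real.log n / (M.α * n)) ^ ((1 : ℝ) / d)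

/-- `L_n^o`, the length of the longest edge incident on the vertex `0` (placed at the
origin) in `G_n^o(r)`; it is `0` if the vertex `0` is isolated. -/
def palmLongestEdge (M : PalmModel d P) (n : ℕ) (r : ℝ) (ω : Ω) : ℝ :=
  sSup ({0} ∪ {t : ℝ | ∃ j, adjO M n r ω 0 j ∧ t = torusDist (M.X 0 ω) (M.X j ω)})

/-- `G(a) = ∫_{ℝ^d \ B(0,a)} g(|z|) dz`. -/
def Gtail (M : PalmModel d P) (a : ℝ) : ℝ :=
  ∫ z in (Metric.ball (0 : EuclideanSpace ℝ (Fin d)) a)ᶜ, M.g ‖z‖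

section Geometry

lemma torusDist_zero_of_mem_cube {x : EuclideanSpace ℝ (Fin d)} (hx : x ∈ cube d) :
    torusDist 0 x = ‖x‖ := by
  have hbdd : BddBelow (Set.range fun z : Fin d → ℤ =>
      ‖(0 : EuclideanSpace ℝ (Fin d)) - x -
        (WithLp.equiv 2 (Fin d → ℝ)).symm (fun i => (z i : ℝ))‖) :=
    ⟨0, by rintro _ ⟨z, rfl⟩; exact norm_nonneg _⟩
  apply le_antisymm
  · refine (ciInf_le hbdd 0).trans (le_of_eq ?_)
    have : (WithLp.equiv 2 (Fin d → ℝ)).symm (fun i => (((0 : Fin d → ℤ) i : ℤ) : ℝ)) = 0 := by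
      ext i; simp
    rw [this]; simp
  · refine le_ciInf fun z => ?_
    rw [EuclideanSpace.norm_eq, EuclideanSpace.norm_eq]
    refine Real.sqrt_le_sqrt (Finset.sum_le_sum fun i _ => ?_)
    obtain ⟨h1, h2⟩ := hx i
    simp only [Real.norm_eq_abs, sq_abs, zero_sub, PiLp.sub_apply, PiLp.neg_apply,
      WithLp.equiv_symm_apply]
    rcases lt_trichotomy (z i) 0 with hz | hz | hz
    · have : (z i : ℝ) ≤ -1 := by exact_mod_cast Int.le_sub_one_of_lt hz
      nlinarith
    · simp [hz]
    · have : (1 : ℝ) ≤ z i := by exact_mod_cast hz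
      nlinarith

lemma torusDist_nonneg (x y : EuclideanSpace ℝ (Fin d)) : 0 ≤ torusDist x y :=
  Real.iInf_nonneg fun _ => norm_nonneg _

lemma measurable_torusDist_left (x : EuclideanSpace ℝ (Fin d)) :
    Measurable (fun y => torusDist x y) :=
  Measurable.iInf fun _ =>
    ((measurable_const.sub measurable_id).sub measurable_const).norm

lemma measurableSet_cube : MeasurableSet (cube d) := by
  have : cube d = ⋂ i, {x : EuclideanSpace ℝ (Fin d) | x i ∈ Set.Ioc (-(1/2) : ℝ) (1/2)} := by
    ext x; simp [cube]
  rw [this]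
  refine MeasurableSet.iInter fun i => ?_
  have h : Measurable fun x : EuclideanSpace ℝ (Fin d) => x i := by fun_prop
  exact h measurableSet_Ioc

lemma ball_subset_cube : Metric.ball (0 : EuclideanSpace ℝ (Fin d)) (1/2) ⊆ cube d := by
  intro x hx i
  have h : |x i| < 1/2 := (PiLp.norm_apply_le x i).trans_lt (by simpa using hx)
  rw [abs_lt] at h
  exact ⟨by linarith, h.2.le⟩

end Geometry

section ConnectionFunction

/-- The connection function is measurable along nonnegative measurable arguments. -/
lemma PalmModel.measurable_g_comp (M : PalmModel d P) {E : Type*} [MeasurableSpace E]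
    {f : E → ℝ} (hf : Measurable f) (hf0 : ∀ x, 0 ≤ f x) : Measurable fun x => M.g (f x) := by
  have h : Antitone fun t : ℝ => M.g (max t 0) := fun s t hst =>
    M.g_antitone (by simp) (by simp) (max_le_max_right 0 hst)
  have := h.measurable.comp hf
  convert this using 2 with x
  simp [hf0 x]

open scoped Pointwise in
/-- Scaling of the tail integral of the connection function. -/
lemma setIntegral_g_norm_div (M : PalmModel d P) {r : ℝ} (hr : 0 < r) (a : ℝ) :
    ∫ x in (Metric.ball (0 : EuclideanSpace ℝ (Fin d)) (a * r))ᶜ, M.g (‖x‖ / r)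
      = r ^ d * Gtail M a := by
  have h := Measure.setIntegral_comp_smul_of_pos volume
    (fun x : EuclideanSpace ℝ (Fin d) => M.g ‖x‖)
    (Metric.ball (0 : EuclideanSpace ℝ (Fin d)) (a * r))ᶜ (inv_pos.2 hr)
  have hs : r⁻¹ • (Metric.ball (0 : EuclideanSpace ℝ (Fin d)) (a * r))ᶜ
      = (Metric.ball 0 a)ᶜ := by
    ext x
    rw [mem_smul_set_iff_inv_smul_mem₀ (inv_ne_zero hr.ne')]
    simp [norm_smul, abs_of_pos hr, mul_comm a r, hr]
  rw [hs] at h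
  simp only [norm_smul, norm_inv, Real.norm_of_nonneg hr.le, finrank_euclideanSpace_fin,
    inv_pow, inv_inv, smul_eq_mul] at h
  rw [Gtail, ← h]
  simp_rw [div_eq_inv_mul]

lemma integrable_g_norm_div (M : PalmModel d P) {r : ℝ} (hr : 0 < r) :
    Integrable fun x : EuclideanSpace ℝ (Fin d) => M.g (‖x‖ / r) := by
  have h := M.g_integrable.comp_smul (inv_ne_zero hr.ne')
  simpa only [norm_smul, norm_inv, Real.norm_of_nonneg hr.le, ← div_eq_inv_mul] using h

/-- The probability that a uniform point of the cube is joined to the origin by an edge longer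
than `b`. -/
def longEdgeProb (M : PalmModel d P) (r b : ℝ) : ℝ :=
  ∫ x in cube d ∩ (Metric.closedBall 0 b)ᶜ, M.g (‖x‖ / r)

lemma longEdgeProb_bounds (M : PalmModel d P) {r : ℝ} (hr : 0 < r) {a : ℝ} (ha : 0 < a) :
    r ^ d * Gtail M a - r ^ d * Gtail M (1 / (2 * r)) ≤ longEdgeProb M r (a * r) ∧
      longEdgeProb M r (a * r) ≤ r ^ d * Gtail M a := by
  have hint := integrable_g_norm_div M hr
  have hnn : ∀ x : EuclideanSpace ℝ (Fin d), 0 ≤ M.g (‖x‖ / r) := fun x =>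
    (M.g_mem _ (by positivity)).1
  have hball : (Metric.ball (0 : EuclideanSpace ℝ (Fin d)) (a * r))ᶜ
      =ᵐ[volume] (Metric.closedBall 0 (a * r))ᶜ := by
    refine Filter.EventuallyEq.compl ?_
    refine (LE.le.eventuallyLE Metric.ball_subset_closedBall).antisymm ?_
    rw [ae_le_set, Metric.closedBall_sdiff_ball]
    exact Measure.addHaar_sphere_of_ne_zero _ _ (by positivity)
  have hcongr : ∫ x in (Metric.ball (0 : EuclideanSpace ℝ (Fin d)) (a * r))ᶜ, M.g (‖x‖ / r)
      = ∫ x in (Metric.closedBall (0 : EuclideanSpace ℝ (Fin d)) (a * r))ᶜ, M.g (‖x‖ / r) :=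
    setIntegral_congr_set hball
  have hsplit := setIntegral_g_norm_div M hr a
  rw [hcongr,
    ← integral_inter_add_sdiff (measurableSet_cube (d := d)) hint.integrableOn] at hsplit
  rw [inter_comm] at hsplit
  have h0 : 0 ≤ ∫ x in (Metric.closedBall 0 (a * r))ᶜ \ cube d, M.g (‖x‖ / r) :=
    integral_nonneg hnn
  have h1 : ∫ x in (Metric.closedBall 0 (a * r))ᶜ \ cube d, M.g (‖x‖ / r)
      ≤ r ^ d * Gtail M (1 / (2 * r)) := by
    rw [← setIntegral_g_norm_div M hr, show 1 / (2 * r) * r = 1 / 2 by field_simp]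
    refine setIntegral_mono_set hint.integrableOn (ae_of_all _ hnn) ?_
    refine LE.le.eventuallyLE fun x hx => ?_
    exact fun h => hx.2 (ball_subset_cube h)
  unfold longEdgeProb
  constructor <;> linarith

/-- A connection function of order `o(r ^ (-c))` with `c > d` has polynomially small tails. -/
lemma exists_Gtail_le (M : PalmModel d P) {c : ℝ} (hc : (d : ℝ) < c)
    (hg : M.g =o[atTop] fun r : ℝ => r ^ (-c)) :
    ∃ C ε : ℝ, 0 < ε ∧ ∀ᶠ R in atTop, Gtail M R ≤ C * R ^ (-ε) := by
  set c' : ℝ := (c + d) / 2 with hc'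
  have hdc' : (d : ℝ) < c' := by rw [hc']; linarith
  have hc'0 : 0 < c' := lt_of_le_of_lt (Nat.cast_nonneg d) hdc'
  have hI : Integrable fun x : EuclideanSpace ℝ (Fin d) => (1 + ‖x‖) ^ (-c') :=
    integrable_one_add_norm (by simpa using hdc')
  refine ⟨2 ^ c' * ∫ x : EuclideanSpace ℝ (Fin d), (1 + ‖x‖) ^ (-c'), c - c',
    by rw [hc']; linarith, ?_⟩
  obtain ⟨R₀, hR₀⟩ := eventually_atTop.1 (hg.bound one_pos)
  filter_upwards [eventually_ge_atTop (max R₀ 1)] with R hR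
  have hR1 : 1 ≤ R := (le_max_right _ _).trans hR
  have hpt : ∀ x ∈ (Metric.ball (0 : EuclideanSpace ℝ (Fin d)) R)ᶜ,
      M.g ‖x‖ ≤ R ^ (-(c - c')) * 2 ^ c' * (1 + ‖x‖) ^ (-c') := by
    intro x hx
    have hRx : R ≤ ‖x‖ := by simpa using hx
    have hx0 : 0 < ‖x‖ := by linarith
    have h1 := hR₀ ‖x‖ (((le_max_left _ _).trans hR).trans hRx)
    rw [one_mul, Real.norm_of_nonneg (Real.rpow_nonneg hx0.le _)] at h1
    calc M.g ‖x‖ ≤ ‖x‖ ^ (-c) := (le_abs_self _).trans h1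
      _ = ‖x‖ ^ (-(c - c')) * ‖x‖ ^ (-c') := by rw [← Real.rpow_add hx0]; congr 1; ring
      _ ≤ R ^ (-(c - c')) * (2 ^ c' * (1 + ‖x‖) ^ (-c')) := by
          refine mul_le_mul ?_ ?_ (by positivity) (by positivity)
          · exact Real.rpow_le_rpow_of_nonpos (by linarith) hRx (by rw [hc']; linarith)
          · have : (2 : ℝ) ^ c' = (1 / 2) ^ (-c') := by
              rw [Real.rpow_neg (by norm_num), one_div, Real.inv_rpow (by norm_num), inv_inv]
            rw [this, ← Real.mul_rpow (by norm_num) (by positivity)]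
            exact Real.rpow_le_rpow_of_nonpos (by positivity) (by linarith) (by linarith)
      _ = _ := by ring
  calc Gtail M R
      ≤ ∫ x in (Metric.ball (0 : EuclideanSpace ℝ (Fin d)) R)ᶜ,
          R ^ (-(c - c')) * 2 ^ c' * (1 + ‖x‖) ^ (-c') :=
        setIntegral_mono_on M.g_integrable.integrableOn (hI.const_mul _).integrableOn
          measurableSet_ball.compl hpt
    _ ≤ ∫ x : EuclideanSpace ℝ (Fin d), R ^ (-(c - c')) * 2 ^ c' * (1 + ‖x‖) ^ (-c') :=
        setIntegral_le_integral (hI.const_mul _) (ae_of_all _ fun x => by positivity)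
    _ = _ := by rw [integral_const_mul]; ring

end ConnectionFunction

section Asymptotics

lemma rhatP_pos (M : PalmModel d P) {γ : ℝ} (hγ : 0 < γ) {n : ℕ} (hn : 2 ≤ n) :
    0 < rhatP M γ n := by
  have h1 : (1 : ℝ) < n := by exact_mod_cast hn
  have := Real.log_pos h1
  have := M.α_pos
  unfold rhatP
  positivity

lemma tendsto_rhatP (M : PalmModel d P) (hd : 0 < d) (γ : ℝ) :
    Tendsto (rhatP M γ) atTop (nhds 0) := by
  have h : Tendsto (fun x : ℝ => Real.log x / x) atTop (nhds 0) := by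
    simpa using Real.isLittleO_log_id_atTop.tendsto_div_nhds_zero
  have h2 := ((h.comp tendsto_natCast_atTop_atTop).const_mul (γ / M.α)).rpow_const
    (p := (1 : ℝ) / d) (Or.inr (by positivity))
  rw [mul_zero, Real.zero_rpow (by positivity)] at h2
  refine h2.congr fun n => ?_
  simp only [rhatP, Function.comp]
  congr 1
  rw [div_mul_div_comm]

/-- Polynomial powers of `r̂_n` beat the logarithmic mean degree `n r̂_n ^ d`. -/
lemma tendsto_mul_rhatP_pow_mul_rpow (M : PalmModel d P) (hd : 0 < d) {γ : ℝ} (hγ : 0 < γ)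
    {ε : ℝ} (hε : 0 < ε) :
    Tendsto (fun n : ℕ => (n : ℝ) * rhatP M γ n ^ d * rhatP M γ n ^ ε) atTop (nhds 0) := by
  have hα := M.α_pos
  have hd' : (0 : ℝ) < d := by exact_mod_cast hd
  have hδ : 0 < ε / d := by positivity
  have h := ((isLittleO_log_rpow_rpow_atTop (1 + ε / d) hδ).tendsto_div_nhds_zero.comp
    tendsto_natCast_atTop_atTop).const_mul ((γ / M.α) ^ (1 + ε / d))
  rw [mul_zero] at h
  refine h.congr' ?_
  filter_upwards [eventually_ge_atTop 2] with n hn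
  have hn1 : (1 : ℝ) < n := by exact_mod_cast hn
  have hlog := Real.log_pos hn1
  have hn0 : (0 : ℝ) < n := by linarith
  have hq : 0 < γ * Real.log n / (M.α * n) := by positivity
  have h1 : rhatP M γ n ^ d = γ * Real.log n / (M.α * n) := by
    rw [rhatP, ← Real.rpow_natCast, ← Real.rpow_mul hq.le, one_div, inv_mul_cancel₀ hd'.ne',
      Real.rpow_one]
  have h2 : rhatP M γ n ^ ε = (γ * Real.log n / (M.α * n)) ^ (ε / d) := by
    rw [rhatP, ← Real.rpow_mul hq.le, one_div, inv_mul_eq_div]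
  have h3 : γ * Real.log n / (M.α * n) = γ / M.α * Real.log n / n := by field_simp
  rw [h1, h2, h3, Real.div_rpow (x := γ / M.α * Real.log n) (by positivity) hn0.le,
    Real.mul_rpow (x := γ / M.α) (by positivity) hlog.le]
  simp only [Function.comp]
  rw [Real.rpow_add (by positivity), Real.rpow_add hlog, Real.rpow_one, Real.rpow_one]
  field_simp

lemma tendsto_mul_longEdgeProb (M : PalmModel d P) (hd : 0 < d) {c : ℝ} (hc : (d : ℝ) < c)
    (hg : M.g =o[atTop] fun r : ℝ => r ^ (-c))
    {γ : ℝ} (hγ : 0 < γ) {l : ℝ} (a : ℕ → ℝ) (ha_pos : ∀ n, 0 < a n)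
    (ha : Tendsto (fun n : ℕ => (n : ℝ) * rhatP M γ n ^ d * Gtail M (a n)) atTop (nhds l)) :
    Tendsto (fun n : ℕ => (n : ℝ) * longEdgeProb M (rhatP M γ n) (a n * rhatP M γ n))
      atTop (nhds l) := by
  obtain ⟨C, ε, hε, hC⟩ := exists_Gtail_le M hc hg
  have hR : Tendsto (fun n => 1 / (2 * rhatP M γ n)) atTop atTop := by
    have h : Tendsto (fun n => 2 * rhatP M γ n) atTop (nhdsWithin 0 (Ioi 0)) := by
      refine tendsto_nhdsWithin_iff.2
        ⟨by simpa using (tendsto_rhatP M hd γ).const_mul 2, ?_⟩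
      filter_upwards [eventually_ge_atTop 2] with n hn
      have := rhatP_pos M hγ hn
      simp only [mem_Ioi]
      positivity
    simpa only [one_div, Pi.inv_def] using h.inv_tendsto_nhdsGT_zero
  have herr := (tendsto_mul_rhatP_pow_mul_rpow M hd hγ hε).const_mul (C * 2 ^ ε)
  rw [mul_zero] at herr
  have hlow := ha.sub herr
  rw [sub_zero] at hlow
  refine tendsto_of_tendsto_of_tendsto_of_le_of_le' hlow ha ?_ ?_
  · filter_upwards [eventually_ge_atTop 2, hR.eventually hC] with n hn hCn
    have hr := rhatP_pos M hγ hn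
    have hb := (longEdgeProb_bounds M hr (ha_pos n)).1
    have hpow : (1 / (2 * rhatP M γ n)) ^ (-ε) = 2 ^ ε * rhatP M γ n ^ ε := by
      rw [one_div, Real.inv_rpow (by positivity), Real.rpow_neg (by positivity), inv_inv,
        Real.mul_rpow (by norm_num) hr.le]
    rw [hpow] at hCn
    have h1 := mul_le_mul_of_nonneg_left hCn
      (show 0 ≤ (n : ℝ) * rhatP M γ n ^ d by positivity)
    have h2 := mul_le_mul_of_nonneg_left hb (Nat.cast_nonneg (α := ℝ) n)
    linarith
  · filter_upwards [eventually_ge_atTop 2] with n hn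
    have hb := (longEdgeProb_bounds M (rhatP_pos M hγ hn) (ha_pos n)).2
    have h2 := mul_le_mul_of_nonneg_left hb (Nat.cast_nonneg (α := ℝ) n)
    linarith

end Asymptotics

section Probability

/-- The pairs (position, edge mark) producing an edge from the origin of length more than `b`. -/
def longEdgeSet (M : PalmModel d P) (r b : ℝ) : Set (EuclideanSpace ℝ (Fin d) × ℝ) :=
  {q | b < torusDist 0 q.1 ∧ q.2 ≤ M.g (torusDist 0 q.1 / r)}

lemma measurableSet_longEdgeSet (M : PalmModel d P) {r : ℝ} (hr : 0 < r) (b : ℝ) :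
    MeasurableSet (longEdgeSet M r b) := by
  have h1 : Measurable fun q : EuclideanSpace ℝ (Fin d) × ℝ => torusDist 0 q.1 :=
    (measurable_torusDist_left 0).comp measurable_fst
  have h2 : Measurable fun q : EuclideanSpace ℝ (Fin d) × ℝ => M.g (torusDist 0 q.1 / r) :=
    M.measurable_g_comp (h1.div_const r) fun q => div_nonneg (torusDist_nonneg _ _) hr.le
  exact (measurableSet_lt measurable_const h1).inter (measurableSet_le measurable_snd h2)

lemma longEdgeProb_nonneg (M : PalmModel d P) {r : ℝ} (hr : 0 < r) (b : ℝ) :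
    0 ≤ longEdgeProb M r b :=
  integral_nonneg fun _ => (M.g_mem _ (by positivity)).1

lemma prod_longEdgeSet (M : PalmModel d P) {r : ℝ} (hr : 0 < r) (b : ℝ) :
    ((volume.restrict (cube d)).prod (volume.restrict (Icc (0 : ℝ) 1))) (longEdgeSet M r b)
      = ENNReal.ofReal (longEdgeProb M r b) := by
  rw [Measure.prod_apply (measurableSet_longEdgeSet M hr b)]
  have hpt : ∀ x ∈ cube d, volume.restrict (Icc (0 : ℝ) 1) (Prod.mk x ⁻¹' longEdgeSet M r b)
      = (Metric.closedBall 0 b)ᶜ.indicator (fun x => ENNReal.ofReal (M.g (‖x‖ / r))) x := by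
    intro x hx
    have hg := M.g_mem (‖x‖ / r) (by positivity)
    by_cases hb : b < ‖x‖
    · have hset : Prod.mk x ⁻¹' longEdgeSet M r b = Iic (M.g (‖x‖ / r)) := by
        ext u; simp [longEdgeSet, torusDist_zero_of_mem_cube hx, hb]
      have hcap : Iic (M.g (‖x‖ / r)) ∩ Icc (0 : ℝ) 1 = Icc 0 (M.g (‖x‖ / r)) := by
        ext u
        simp only [mem_inter_iff, mem_Iic, mem_Icc]
        exact ⟨fun h => ⟨h.2.1, h.1⟩, fun h => ⟨h.2, h.1, h.2.trans hg.2⟩⟩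
      rw [hset, Measure.restrict_apply measurableSet_Iic, hcap, Real.volume_Icc, sub_zero,
        indicator_of_mem (by simpa using hb)]
    · have hset : Prod.mk x ⁻¹' longEdgeSet M r b = ∅ := by
        ext u; simp [longEdgeSet, torusDist_zero_of_mem_cube hx, hb]
      rw [hset, measure_empty, indicator_of_notMem (by simpa using hb)]
  rw [setLIntegral_congr_fun measurableSet_cube hpt,
    setLIntegral_indicator Metric.isClosed_closedBall.measurableSet.compl, longEdgeProb,
    ofReal_integral_eq_lintegral_ofReal (integrable_g_norm_div M hr).integrableOn
      (ae_of_all _ fun x => (M.g_mem _ (by positivity)).1), inter_comm]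

/-- The event that vertex `0` has a long edge to vertex `j + 1` in the graph on all vertices. -/
def longEdgeEvent (M : PalmModel d P) (r b : ℝ) (j : ℕ) : Set Ω :=
  (fun ω => (M.X (j + 1) ω, M.U 0 (j + 1) ω)) ⁻¹' longEdgeSet M r b

lemma palmLongestEdge_le_iff (M : PalmModel d P) (n : ℕ) (r : ℝ) {b : ℝ} (hb : 0 ≤ b) (ω : Ω) :
    palmLongestEdge M n r ω ≤ b ↔ ∀ j < M.N n ω, ω ∉ longEdgeEvent M r b j := by
  have hfin : ({0} ∪ {t : ℝ | ∃ j, adjO M n r ω 0 j ∧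
      t = torusDist (M.X 0 ω) (M.X j ω)}).Finite := by
    refine (finite_singleton 0).union (((finite_Iic (M.N n ω)).image
      fun j => torusDist (M.X 0 ω) (M.X j ω)).subset ?_)
    rintro t ⟨j, hj, rfl⟩
    exact ⟨j, hj.2.2.1, rfl⟩
  rw [palmLongestEdge, csSup_le_iff hfin.bddAbove ⟨0, Or.inl rfl⟩]
  constructor
  · rintro h j hj ⟨h1, h2⟩
    refine absurd (h _ (Or.inr ⟨j + 1, ?_, rfl⟩)) ?_
    · refine ⟨by omega, by omega, by omega, ?_⟩
      simpa [M.X_zero] using h2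
    · simpa [M.X_zero] using h1
  · rintro h t (rfl | ⟨j, ⟨h0, -, hj, hU⟩, rfl⟩)
    · exact hb
    · obtain ⟨j, rfl⟩ := Nat.exists_eq_succ_of_ne_zero h0.symm
      by_contra hlt
      refine h j (by omega) ⟨?_, ?_⟩
      · simpa [M.X_zero] using hlt
      · simpa [M.X_zero] using hU

lemma measurable_prodMk_sup {A B C : Type*} {m₁ m₂ : MeasurableSpace A} [MeasurableSpace B]
    [MeasurableSpace C] {f : A → B} {g : A → C} (hf : Measurable[m₁] f) (hg : Measurable[m₂] g) :
    Measurable[m₁ ⊔ m₂] fun x => (f x, g x) :=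
  Measurable.prodMk (hf.mono le_sup_left le_rfl) (hg.mono le_sup_right le_rfl)

lemma indep_positions_marks_counts (M : PalmModel d P) :
    Indep (MeasurableSpace.comap (fun ω => fun i : ℕ => M.X i ω) inferInstance ⊔
        MeasurableSpace.comap (fun ω => fun p : ℕ × ℕ => M.U p.1 p.2 ω) inferInstance)
      (MeasurableSpace.comap (fun ω => fun n : ℕ => M.N n ω) inferInstance) P := by
  have hle : ∀ i : Fin 3,
      (![MeasurableSpace.comap (fun ω => fun i : ℕ => M.X i ω) inferInstance,
         MeasurableSpace.comap (fun ω => fun n : ℕ => M.N n ω) inferInstance,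
         MeasurableSpace.comap (fun ω => fun p : ℕ × ℕ => M.U p.1 p.2 ω) inferInstance]
        : Fin 3 → MeasurableSpace Ω) i ≤ ‹MeasurableSpace Ω› := by
    intro i
    fin_cases i
    · exact (measurable_pi_lambda _ M.X_meas).comap_le
    · exact (measurable_pi_lambda _ M.N_meas).comap_le
    · exact (measurable_pi_lambda _ fun p : ℕ × ℕ => M.U_meas p.1 p.2).comap_le
  have h := indep_iSup_of_disjoint hle M.families_indep
    (S := {0, 2}) (T := {1}) (by simp)
  simpa [iSup_insert] using h

variable [IsProbabilityMeasure P]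

/-- The first `k` positions and edge marks at the origin are i.i.d. uniform. -/
lemma map_positions_marks (M : PalmModel d P) (k : ℕ) :
    P.map (fun ω => ((fun j : Fin k => M.X (j + 1) ω), fun j : Fin k => M.U 0 (j + 1) ω))
      = (Measure.pi fun _ : Fin k => volume.restrict (cube d)).prod
        (Measure.pi fun _ : Fin k => volume.restrict (Icc (0 : ℝ) 1)) := by
  have hX : iIndepFun (fun j : Fin k => M.X (j + 1)) P :=
    M.X_indep.precomp (g := fun j : Fin k => ⟨j + 1, by omega⟩)
      fun i j hij => Fin.ext (Nat.succ_injective (congrArg Subtype.val hij))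
  have hU : iIndepFun (fun j : Fin k => M.U 0 (j + 1)) P :=
    M.U_indep.precomp (g := fun j : Fin k => ⟨(0, j + 1), by simp⟩)
      fun i j hij => Fin.ext (Nat.succ_injective (congrArg (fun p => p.val.2) hij))
  have hXU : IndepFun (fun ω => fun i : ℕ => M.X i ω)
      (fun ω => fun p : ℕ × ℕ => M.U p.1 p.2 ω) P := by
    rw [IndepFun_iff_Indep]
    exact M.families_indep.indep (i := 0) (j := 2) (by decide)
  have hXU' : IndepFun (fun ω => fun j : Fin k => M.X (j + 1) ω)
      (fun ω => fun j : Fin k => M.U 0 (j + 1) ω) P :=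
    hXU.comp (φ := fun x (j : Fin k) => x (j + 1))
      (ψ := fun u (j : Fin k) => u (0, (j : ℕ) + 1))
      (measurable_pi_lambda _ fun j => measurable_pi_apply _)
      (measurable_pi_lambda _ fun j => measurable_pi_apply _)
  rw [(indepFun_iff_map_prod_eq_prod_map_map
      (measurable_pi_lambda _ fun j => M.X_meas _).aemeasurable
      (measurable_pi_lambda _ fun j => M.U_meas _ _).aemeasurable).1 hXU',
    (iIndepFun_iff_map_fun_eq_pi_map fun j => (M.X_meas _).aemeasurable).1 hX,
    (iIndepFun_iff_map_fun_eq_pi_map fun j => (M.U_meas _ _).aemeasurable).1 hU]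
  simp_rw [M.X_unif _ (Nat.le_add_left 1 _), M.U_unif 0 _ (Nat.succ_pos _)]

lemma isProbabilityMeasure_restrict_cube (M : PalmModel d P) :
    IsProbabilityMeasure ((volume : Measure (EuclideanSpace ℝ (Fin d))).restrict (cube d)) := by
  rw [← M.X_unif 1 le_rfl]
  exact Measure.isProbabilityMeasure_map (M.X_meas 1).aemeasurable

lemma isProbabilityMeasure_restrict_Icc :
    IsProbabilityMeasure (volume.restrict (Icc (0 : ℝ) 1)) :=
  ⟨by simp⟩

lemma longEdgeProb_le_one (M : PalmModel d P) {r : ℝ} (hr : 0 < r) (b : ℝ) :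
    longEdgeProb M r b ≤ 1 := by
  have := isProbabilityMeasure_restrict_cube M
  have := isProbabilityMeasure_restrict_Icc
  rw [← ENNReal.ofReal_le_one, ← prod_longEdgeSet M hr b]
  exact prob_le_one

lemma measure_iInter_longEdgeEvent_compl (M : PalmModel d P) {r : ℝ} (hr : 0 < r) (b : ℝ)
    (k : ℕ) :
    P (⋂ j : Fin k, (longEdgeEvent M r b j)ᶜ) = ENNReal.ofReal (1 - longEdgeProb M r b) ^ k := by
  have := isProbabilityMeasure_restrict_cube M
  have := isProbabilityMeasure_restrict_Icc
  have hB := (measurableSet_longEdgeSet M hr b).compl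
  have hmp := measurePreserving_arrowProdEquivProdArrow (EuclideanSpace ℝ (Fin d)) ℝ (Fin k)
    (fun _ => volume.restrict (cube d)) (fun _ => volume.restrict (Icc (0 : ℝ) 1))
  have hpre : (⋂ j : Fin k, (longEdgeEvent M r b j)ᶜ)
      = (fun ω => ((fun j : Fin k => M.X (j + 1) ω), fun j : Fin k => M.U 0 (j + 1) ω)) ⁻¹'
        ((MeasurableEquiv.arrowProdEquivProdArrow _ _ (Fin k)).symm ⁻¹'
          (univ.pi fun _ => (longEdgeSet M r b)ᶜ)) := by
    ext ω
    simp only [mem_iInter, mem_preimage, mem_univ_pi]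
    rfl
  have hpi : MeasurableSet (univ.pi fun _ : Fin k => (longEdgeSet M r b)ᶜ) :=
    MeasurableSet.univ_pi fun _ => hB
  rw [hpre, ← Measure.map_apply
      ((measurable_pi_lambda _ fun j => M.X_meas _).prodMk
        (measurable_pi_lambda _ fun j => M.U_meas _ _))
      ((MeasurableEquiv.measurable _) hpi),
    map_positions_marks, (hmp.symm _).measure_preimage hpi.nullMeasurableSet, Measure.pi_pi,
    Finset.prod_const, Finset.card_univ, Fintype.card_fin,
    prob_compl_eq_one_sub (measurableSet_longEdgeSet M hr b), prod_longEdgeSet M hr,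
    ENNReal.ofReal_sub _ (longEdgeProb_nonneg M hr b), ENNReal.ofReal_one]

lemma measure_noLongEdge_inter_count (M : PalmModel d P) {r : ℝ} (hr : 0 < r) (b : ℝ)
    (n k : ℕ) :
    P ((⋂ j : Fin k, (longEdgeEvent M r b j)ᶜ) ∩ {ω | M.N n ω = k})
      = ENNReal.ofReal (1 - longEdgeProb M r b) ^ k
        * ENNReal.ofReal (Real.exp (-(n : ℝ)) * (n : ℝ) ^ k / k.factorial) := by
  rw [← measure_iInter_longEdgeEvent_compl M hr, ← M.N_poisson]
  refine (Indep_iff _ _ P).1 (indep_positions_marks_counts M) _ _ ?_ ?_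
  · refine MeasurableSet.iInter fun j => MeasurableSet.compl ?_
    exact measurable_prodMk_sup
      ((measurable_pi_apply ((j : ℕ) + 1)).comp
        (comap_measurable fun ω => fun i : ℕ => M.X i ω))
      ((measurable_pi_apply ((0, (j : ℕ) + 1) : ℕ × ℕ)).comp
        (comap_measurable fun ω => fun p : ℕ × ℕ => M.U p.1 p.2 ω))
      (measurableSet_longEdgeSet M hr b)
  · exact ⟨(fun f : ℕ → ℕ => f n) ⁻¹' {k}, measurable_pi_apply n (measurableSet_singleton k), rfl⟩

/-- The probability that no edge at the origin is longer than `b` is the void probability of a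
thinned Poisson count. -/
lemma measure_palmLongestEdge_le (M : PalmModel d P) {r : ℝ} (hr : 0 < r) {b : ℝ} (hb : 0 ≤ b)
    (n : ℕ) :
    P {ω | palmLongestEdge M n r ω ≤ b}
      = ENNReal.ofReal (Real.exp (-(n * longEdgeProb M r b))) := by
  have hmeas : ∀ j, MeasurableSet (longEdgeEvent M r b j) := fun j =>
    ((M.X_meas _).prodMk (M.U_meas _ _)) (measurableSet_longEdgeSet M hr b)
  have hdecomp : {ω | palmLongestEdge M n r ω ≤ b}
      = ⋃ k, (⋂ j : Fin k, (longEdgeEvent M r b j)ᶜ) ∩ {ω | M.N n ω = k} := by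
    ext ω
    simp only [mem_ofPred_eq, palmLongestEdge_le_iff M n r hb, mem_iUnion, mem_inter_iff,
      mem_iInter, mem_compl_iff, exists_eq_right']
    exact ⟨fun h j => h j j.2, fun h j hj => h ⟨j, hj⟩⟩
  have hp := longEdgeProb_le_one M hr b
  set p := longEdgeProb M r b with hp_def
  rw [hdecomp, measure_iUnion]
  · have hterm : ∀ k : ℕ, P ((⋂ j : Fin k, (longEdgeEvent M r b j)ᶜ) ∩ {ω | M.N n ω = k})
        = ENNReal.ofReal (Real.exp (-(n : ℝ)) * (((n : ℝ) * (1 - p)) ^ k / k.factorial)) := by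
      intro k
      rw [measure_noLongEdge_inter_count M hr, ← hp_def, ← ENNReal.ofReal_pow (by linarith),
        ← ENNReal.ofReal_mul (by have : 0 ≤ 1 - p := by linarith
                                 positivity), mul_pow]
      congr 1
      ring
    have hsum : HasSum (fun k : ℕ => Real.exp (-(n : ℝ)) *
        (((n : ℝ) * (1 - p)) ^ k / k.factorial)) (Real.exp (-(n * p))) := by
      have h := (NormedSpace.expSeries_div_hasSum_exp ((n : ℝ) * (1 - p))).mul_left
        (Real.exp (-(n : ℝ)))
      rw [← Real.exp_eq_exp_ℝ, ← Real.exp_add] at h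
      convert h using 1
      congr 1
      ring
    simp_rw [hterm]
    rw [← ENNReal.ofReal_tsum_of_nonneg _ hsum.summable, hsum.tsum_eq]
    intro k
    have : 0 ≤ 1 - p := by linarith
    positivity
  · intro k l hkl
    refine Set.disjoint_left.2 fun ω h1 h2 => hkl (h1.2.symm.trans h2.2)
  · exact fun k => (MeasurableSet.iInter fun j : Fin k => (hmeas j).compl).inter
      (M.N_meas n (measurableSet_singleton k))

end Probability

/-- Proposition 2: if `n r̂_n(γ)^d G(a_n) → e^{-β₀}`, then
`P(L_n^o ≤ a_n r̂_n(γ)) → exp(-e^{-β₀})`. -/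
theorem palmLongestEdge_tendsto (hd : 2 ≤ d) [IsProbabilityMeasure P] (M : PalmModel d P)
    {c : ℝ} (hc : (d : ℝ) < c)
    (hg : M.g =o[atTop] fun r : ℝ => r ^ (-c))
    {γ : ℝ} (hγ : 0 < γ) (β₀ : ℝ) (a : ℕ → ℝ) (ha_pos : ∀ n, 0 < a n)
    (ha : Tendsto (fun n : ℕ => (n : ℝ) * rhatP M γ n ^ d * Gtail M (a n)) atTop
      (nhds (Real.exp (-β₀)))) :
    Tendsto (fun n : ℕ =>
        (P {ω | palmLongestEdge M n (rhatP M γ n) ω ≤ a n * rhatP M γ n}).toReal)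
      atTop (nhds (Real.exp (-Real.exp (-β₀)))) := by
  have h := (tendsto_mul_longEdgeProb M (by omega) hc hg hγ a ha_pos ha).neg.rexp
  refine h.congr' ?_
  filter_upwards [eventually_ge_atTop 2] with n hn
  have hr := rhatP_pos M hγ hn
  rw [measure_palmLongestEdge_le M hr (mul_nonneg (ha_pos n).le hr.le),
    ENNReal.toReal_ofReal (Real.exp_nonneg _)]

end RCM
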